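/- (Entropic Furstenberg bound) For any random variable R supported on F_q^n and any 1 ≤ k < n, there exists a surjective linear map φ: F_q^n → F_q^{n−k} such that H_∞^q(φ(R)) ≥ ((n−k)/n)·H_∞^q(R) − k·log_q(2 − q^{-1}). -/

import Mathlib

/-!
Write `f x = Pr[R = x]`. The heart of the matter is a maximal inequality for line sums: if
`∑ x, f x ^ n ≤ δ ^ n`, then some direction `v ≠ 0` has `∑ t, f (a + t • v) ≤ (2 - q⁻¹) * δ` for
every `a`.

It is proved by the polynomial method. For a large scale `N`, counting coefficients against
vanishing conditions yields a nonzero polynomial `P` of degree `d`, about `N * δ` at most, that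
vanishes at each `x` to order about `N * f x`. By the Schwartz-Zippel bound with multiplicities,
some Hasse derivative `D^α` with `q * |α| ≤ d` does not kill the top-degree form of `P` at some
`v ≠ 0`. The restriction of `D^α P` to a line `a + t • v` then has degree exactly `d - |α|`, and
it still vanishes at each of the `q` points `t` to order `N * f (a + t • v) - |α|`. Counting
zeros gives `N * ∑ t, f (a + t • v) ≤ d + (q - 1) * |α| ≤ (2 - q⁻¹) * d`, and letting `N → ∞`
removes the error terms.

If `M` is the maximum of `f`, then `∑ x, f x ^ n ≤ M ^ (n - 1)`, so `δ = M ^ ((n - 1) / n)` is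
allowed: the quotient by the span of `v` has maximal probability at most `(2 - q⁻¹) * δ`. Taking
logarithms gives the case `k = 1`, which is iterated.
-/

/-- The `q`-ary min-entropy of a random variable (probability mass function) `p`:
`H_∞^q(p) = −log_q (max_w Pr[p = w])`. -/
noncomputable def minEntropy {α : Type*} (q : ℕ) (p : PMF α) : ℝ :=
  - Real.logb q (⨆ w : α, (p w).toReal)

section Univariate

open Polynomial

variable {R : Type*} [CommRing R]

theorem X_pow_dvd_taylor_iff {k : ℕ} {t : R} {g : R[X]} :
    X ^ k ∣ taylor t g ↔ (X - C t) ^ k ∣ g := by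
  have h : taylor t ((X - C t) ^ k) = X ^ k := by simp
  rw [← h]
  exact map_dvd_iff (taylorEquiv t)

theorem sum_le_natDegree_of_X_pow_dvd_taylor [IsDomain R] {g : R[X]} (hg : g ≠ 0) (S : Finset R)
    (k : R → ℕ) (h : ∀ t ∈ S, X ^ k t ∣ taylor t g) : ∑ t ∈ S, k t ≤ g.natDegree := by
  classical
  calc ∑ t ∈ S, k t ≤ ∑ t ∈ S, g.roots.count t := by
        refine Finset.sum_le_sum fun t ht => ?_
        rw [count_roots, le_rootMultiplicity_iff hg]
        exact X_pow_dvd_taylor_iff.mp (h t ht)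
    _ ≤ ∑ t ∈ S ∪ g.roots.toFinset, g.roots.count t :=
        Finset.sum_le_sum_of_subset Finset.subset_union_left
    _ = g.roots.card := Multiset.sum_count_eq_card fun _ ha =>
        Finset.mem_union_right S (Multiset.mem_toFinset.mpr ha)
    _ ≤ g.natDegree := card_roots' g

theorem exists_coeff_taylor_ne_zero [IsDomain R] {g : R[X]} (hg : g ≠ 0) {S : Finset R}
    (hS : S.Nonempty) : ∃ t ∈ S, ∃ a, S.card * a ≤ g.natDegree ∧ (taylor t g).coeff a ≠ 0 := by
  by_contra! h
  have hdvd : ∀ t ∈ S, X ^ (g.natDegree / S.card + 1) ∣ taylor t g := fun t ht =>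
    X_pow_dvd_iff.mpr fun a ha => h t ht a <|
      (Nat.mul_le_mul_left _ (Nat.le_of_lt_succ ha)).trans (Nat.mul_div_le _ _)
  have hle := sum_le_natDegree_of_X_pow_dvd_taylor hg S _ hdvd
  rw [Finset.sum_const, smul_eq_mul] at hle
  exact (Nat.lt_mul_div_succ g.natDegree hS.card_pos).not_ge hle

end Univariate
section HasseDerivative

open MvPolynomial

variable {σ R : Type*} [CommRing R]

/-- The translate `P(X + x)` of a polynomial `P`, whose coefficients are the Taylor coefficients of
`P` at `x`. -/
noncomputable def mvTaylor (x : σ → R) : MvPolynomial σ R →ₐ[R] MvPolynomial σ R :=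
  aeval fun i => X i + C (x i)

/-- The Hasse derivative of order `α` of a polynomial in several variables: the coefficient of
`Y ^ α` in `P(X + Y)`. The outer variables of `MvPolynomial σ (MvPolynomial σ R)` are the `Y i`. -/
noncomputable def mvHasseDeriv (α : σ →₀ ℕ) : MvPolynomial σ R →ₗ[R] MvPolynomial σ R :=
  (lcoeff (MvPolynomial σ R) α).restrictScalars R ∘ₗ
    (aeval fun i => X i + C (X i) :
      MvPolynomial σ R →ₐ[R] MvPolynomial σ (MvPolynomial σ R)).toLinearMap

theorem mvHasseDeriv_apply (α : σ →₀ ℕ) (P : MvPolynomial σ R) :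
    mvHasseDeriv α P = coeff α (aeval (fun i => X i + C (X i)) P) :=
  rfl

theorem mvTaylor_C (x : σ → R) (r : R) : mvTaylor x (C r) = C r :=
  aeval_C _ r

theorem mvTaylor_X (x : σ → R) (i : σ) : mvTaylor x (X i) = X i + C (x i) :=
  aeval_X _ i

theorem mvTaylor_zero (P : MvPolynomial σ R) : mvTaylor 0 P = P := by
  simp [mvTaylor]

theorem eval_mvHasseDeriv (x : σ → R) (α : σ →₀ ℕ) (P : MvPolynomial σ R) :
    eval x (mvHasseDeriv α P) = coeff α (mvTaylor x P) := by
  rw [mvHasseDeriv_apply, ← coeff_map]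
  congr 1
  induction P using MvPolynomial.induction_on <;> simp_all [mvTaylor, algebraMap_eq]

theorem mvTaylor_mvHasseDeriv (x : σ → R) (α : σ →₀ ℕ) (P : MvPolynomial σ R) :
    mvTaylor x (mvHasseDeriv α P) = mvHasseDeriv α (mvTaylor x P) := by
  rw [mvHasseDeriv_apply, mvHasseDeriv_apply, ← RingHom.coe_coe (mvTaylor x), ← coeff_map]
  congr 1
  induction P using MvPolynomial.induction_on <;>
    simp_all [mvTaylor, algebraMap_eq, add_assoc]

theorem coeff_prod_aeval_X [Fintype σ] (α : σ →₀ ℕ) (g : σ → Polynomial R) :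
    coeff α (∏ i, Polynomial.aeval (X i : MvPolynomial σ R) (g i)) = ∏ i, (g i).coeff (α i) := by
  classical
  let N := α.degree + ∑ i, (g i).natDegree + 1
  have hg (i : σ) : (g i).natDegree < N := by
    have := Finset.single_le_sum (f := fun i => (g i).natDegree) (by simp) (Finset.mem_univ i)
    omega
  have hα (i : σ) : α i ∈ Finset.range N := by
    have := Finsupp.le_degree i α
    simp only [Finset.mem_range]
    omega
  have hmon (e : σ → ℕ) : ∏ i, algebraMap R (MvPolynomial σ R) ((g i).coeff (e i)) * X i ^ e i =
      monomial (Finsupp.equivFunOnFinite.symm e) (∏ i, (g i).coeff (e i)) := by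
    rw [monomial_eq, Finsupp.prod_fintype _ _ (by simp), Finset.prod_mul_distrib, map_prod]
    rfl
  simp_rw [Polynomial.aeval_eq_sum_range' (hg _), Algebra.smul_def, Finset.prod_univ_sum, hmon,
    coeff_sum, coeff_monomial]
  rw [Finset.sum_eq_single (⇑α)]
  · simp
  · intro e _ he
    rw [if_neg fun h => he (by simp [← h])]
  · simp [hα]

theorem mvHasseDeriv_monomial [Fintype σ] (α β : σ →₀ ℕ) (r : R) :
    mvHasseDeriv α (monomial β r) = monomial (β - α) (r * ∏ i, ((β i).choose (α i) : R)) := by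
  have h (i : σ) : ((X i + C (X i)) ^ β i : MvPolynomial σ (MvPolynomial σ R)) =
      Polynomial.aeval (R := MvPolynomial σ R) (X i)
        ((Polynomial.X + Polynomial.C (X i)) ^ β i) := by
    simp [algebraMap_eq]
  rw [mvHasseDeriv_apply, aeval_monomial, Finsupp.prod_fintype _ _ (by simp)]
  simp_rw [h]
  rw [MvPolynomial.algebraMap_apply, algebraMap_eq, coeff_C_mul, coeff_prod_aeval_X,
    monomial_eq, Finsupp.prod_fintype _ _ (by simp)]
  simp only [Polynomial.coeff_X_add_C_pow, Finset.prod_mul_distrib, map_mul, map_prod, map_natCast,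
    Finsupp.tsub_apply]
  ring

theorem coeff_mvHasseDeriv [Fintype σ] (α γ : σ →₀ ℕ) (P : MvPolynomial σ R) :
    coeff γ (mvHasseDeriv α P) = coeff (γ + α) P * ∏ i, (((γ + α) i).choose (α i) : R) := by
  classical
  induction P using MvPolynomial.induction_on' with
  | monomial β r =>
    rw [mvHasseDeriv_monomial, coeff_monomial, coeff_monomial]
    by_cases hle : α ≤ β
    · by_cases hβ : β = γ + α
      · simp [hβ]
      · rw [if_neg hβ, if_neg fun h => hβ (by rw [← h, tsub_add_cancel_of_le hle]), zero_mul]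
    · obtain ⟨i, hi⟩ : ∃ i, β i < α i := by simpa [Finsupp.le_def] using hle
      rw [if_neg fun h : β = γ + α => hle (h ▸ le_add_self), zero_mul,
        Finset.prod_eq_zero (Finset.mem_univ i) (by simp [Nat.choose_eq_zero_of_lt hi])]
      simp
  | add P Q hP hQ => rw [map_add, coeff_add, coeff_add, hP, hQ, add_mul]

theorem coeff_mvHasseDeriv_eq_zero [Finite σ] {α γ : σ →₀ ℕ} {P : MvPolynomial σ R}
    (h : coeff (γ + α) P = 0) : coeff γ (mvHasseDeriv α P) = 0 := by
  cases nonempty_fintype σ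
  rw [coeff_mvHasseDeriv, h, zero_mul]

theorem totalDegree_mvHasseDeriv_le [Finite σ] (α : σ →₀ ℕ) (P : MvPolynomial σ R) :
    (mvHasseDeriv α P).totalDegree ≤ P.totalDegree - α.degree := by
  refine Finset.sup_le fun γ hγ => ?_
  have h : (γ + α).degree ≤ P.totalDegree := le_totalDegree <|
    mem_support_iff.mpr <| mt coeff_mvHasseDeriv_eq_zero <| mem_support_iff.mp hγ
  rw [map_add] at h
  exact Nat.le_sub_of_add_le h

theorem homogeneousComponent_mvHasseDeriv [Finite σ] (α : σ →₀ ℕ) (j : ℕ) (P : MvPolynomial σ R) :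
    homogeneousComponent j (mvHasseDeriv α P) =
      mvHasseDeriv α (homogeneousComponent (j + α.degree) P) := by
  cases nonempty_fintype σ
  ext γ
  rw [coeff_homogeneousComponent, coeff_mvHasseDeriv, coeff_mvHasseDeriv,
    coeff_homogeneousComponent]
  simp

theorem mvHasseDeriv_mem_pow_idealOfVars [Finite σ] (α : σ →₀ ℕ) {m : ℕ} {P : MvPolynomial σ R}
    (h : P ∈ idealOfVars σ R ^ m) : mvHasseDeriv α P ∈ idealOfVars σ R ^ (m - α.degree) := by
  rw [mem_pow_idealOfVars_iff'] at h ⊢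
  refine fun γ hγ => coeff_mvHasseDeriv_eq_zero (h _ ?_)
  rw [map_add]
  omega

end HasseDerivative

section VanishingOrder

open MvPolynomial

variable {σ R : Type*} [CommRing R]

/-- `P` vanishes to order at least `m` at `x`: all monomials of `P(X + x)` have degree at
least `m`. In contrast to partial derivatives, this is meaningful in positive characteristic. -/
def VanishesToOrder (P : MvPolynomial σ R) (x : σ → R) (m : ℕ) : Prop :=
  mvTaylor x P ∈ idealOfVars σ R ^ m

theorem VanishesToOrder.mvHasseDeriv [Finite σ] {P : MvPolynomial σ R} {x : σ → R} {m : ℕ}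
    (h : VanishesToOrder P x m) (α : σ →₀ ℕ) :
    VanishesToOrder (mvHasseDeriv α P) x (m - α.degree) := by
  rw [VanishesToOrder, mvTaylor_mvHasseDeriv]
  exact mvHasseDeriv_mem_pow_idealOfVars α h

end VanishingOrder

section RestrictLine

open Polynomial

variable {σ R : Type*} [CommRing R]

/-- The restriction `P(a + X v)` of a polynomial `P` to the line through `a` in direction `v`,
which turns vanishing orders of `P` into root multiplicities. -/
noncomputable def restrictLine (a v : σ → R) : MvPolynomial σ R →ₐ[R] R[X] :=
  MvPolynomial.aeval fun i => C (a i) + C (v i) * X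

theorem restrictLine_X (a v : σ → R) (i : σ) :
    restrictLine a v (.X i) = C (a i) + C (v i) * X :=
  MvPolynomial.aeval_X _ i

theorem taylor_restrictLine (a v : σ → R) (t : R) (P : MvPolynomial σ R) :
    taylor t (restrictLine a v P) = restrictLine (a + t • v) v P := by
  suffices h : (taylorAlgHom t).comp (restrictLine a v) = restrictLine (a + t • v) v from
    DFunLike.congr_fun h P
  ext i : 1
  simp only [AlgHom.coe_comp, Function.comp_apply, restrictLine_X, taylorAlgHom_apply, map_add,
    taylor_C, taylor_X, Pi.add_apply, Pi.smul_apply, smul_eq_mul, map_mul]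
  ring

theorem restrictLine_eq_mvTaylor (a v : σ → R) (P : MvPolynomial σ R) :
    restrictLine a v P = restrictLine 0 v (mvTaylor a P) := by
  suffices h : restrictLine a v = (restrictLine 0 v).comp (mvTaylor a) from
    DFunLike.congr_fun h P
  ext i : 1
  simp only [AlgHom.coe_comp, Function.comp_apply, mvTaylor_X, restrictLine_X, map_add,
    MvPolynomial.algHom_C, algebraMap_eq, Pi.zero_apply, map_zero, zero_add]
  ring

theorem VanishesToOrder.X_pow_dvd_restrictLine {P : MvPolynomial σ R} {a : σ → R} {m : ℕ}
    (h : VanishesToOrder P a m) (v : σ → R) : X ^ m ∣ restrictLine a v P := by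
  have hX : (MvPolynomial.idealOfVars σ R).map (restrictLine 0 v) ≤ Ideal.span {X} := by
    rw [MvPolynomial.idealOfVars, Ideal.map_span, Ideal.span_le]
    rintro _ ⟨_, ⟨i, rfl⟩, rfl⟩
    simp [restrictLine_X, Ideal.mem_span_singleton]
  rw [← Ideal.mem_span_singleton, ← Ideal.span_singleton_pow, restrictLine_eq_mvTaylor]
  refine Ideal.pow_right_mono hX m ?_
  rw [← Ideal.map_pow]
  exact Ideal.mem_map_of_mem _ h

theorem natDegree_restrictLine_le (a v : σ → R) (P : MvPolynomial σ R) :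
    (restrictLine a v P).natDegree ≤ P.totalDegree :=
  (MvPolynomial.aeval_natDegree_le P le_rfl _ fun i => by compute_degree).trans_eq (mul_one _)

theorem prod_map_toMultiset {ι M : Type*} [CommMonoid M] (β : ι →₀ ℕ) (f : ι → M) :
    (β.toMultiset.map f).prod = β.prod fun i k => f i ^ k := by
  rw [Finsupp.toMultiset_map, Finsupp.prod_toMultiset,
    Finsupp.prod_mapDomain_index pow_zero pow_add]

theorem coeff_degree_restrictLine_monomial (a v : σ → R) (β : σ →₀ ℕ) (r : R) :
    (restrictLine a v (.monomial β r)).coeff β.degree =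
      MvPolynomial.eval v (.monomial β r) := by
  have h := coeff_multiset_prod_of_natDegree_le
    (β.toMultiset.map fun i => C (a i) + C (v i) * X) 1 <| by
      simp only [Multiset.mem_map]
      rintro _ ⟨i, -, rfl⟩
      compute_degree
  rw [Multiset.card_map, Finsupp.card_toMultiset, mul_one, Multiset.map_map] at h
  simp only [Function.comp_def, coeff_add, coeff_C_succ, coeff_C_mul, coeff_X_one, zero_add,
    mul_one, prod_map_toMultiset] at h
  rw [restrictLine, MvPolynomial.aeval_monomial, MvPolynomial.eval_monomial, algebraMap_eq,
    coeff_C_mul, ← h]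
  rfl

theorem coeff_restrictLine (a v : σ → R) {P : MvPolynomial σ R} {d : ℕ} (hd : P.totalDegree ≤ d) :
    (restrictLine a v P).coeff d = MvPolynomial.eval v (MvPolynomial.homogeneousComponent d P) := by
  rw [MvPolynomial.homogeneousComponent_apply, map_sum, Finset.sum_filter]
  nth_rw 1 [P.as_sum]
  rw [map_sum, finsetSum_coeff]
  refine Finset.sum_congr rfl fun β hβ => ?_
  split_ifs with h
  · rw [← h, coeff_degree_restrictLine_monomial]
  · have hdeg : β.degree < d := ((MvPolynomial.le_totalDegree hβ).trans hd).lt_of_ne h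
    refine coeff_eq_zero_of_natDegree_lt ((natDegree_restrictLine_le a v _).trans_lt ?_)
    exact (MvPolynomial.totalDegree_monomial_le _ _).trans_lt hdeg

end RestrictLine

section SchwartzZippel

open Polynomial

variable {R : Type*} [CommRing R]

theorem exists_polynomial_coeff_eq {A B : Type*} [Semiring A] [Semiring B] (ℓ : A →+ B)
    (H : A[X]) : ∃ g : B[X], ∀ i, g.coeff i = ℓ (H.coeff i) :=
  ⟨∑ i ∈ H.support, monomial i (ℓ (H.coeff i)), fun i => by
    by_cases h : H.coeff i = 0 <;> simp [coeff_monomial, h]⟩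

theorem coeff_taylor_of_coeff_eq {A : Type*} [CommRing A] [Algebra R A] (ℓ : A →ₗ[R] R)
    {H : A[X]} {g : R[X]} (hg : ∀ i, g.coeff i = ℓ (H.coeff i)) (t : R) (a : ℕ) :
    (taylor t g).coeff a = ℓ ((taylor (algebraMap R A t) H).coeff a) := by
  set N := max (hasseDeriv a g).natDegree (hasseDeriv a H).natDegree + 1
  rw [taylor_coeff, taylor_coeff, eval_eq_sum_range' (n := N) (by omega),
    eval_eq_sum_range' (n := N) (by omega), map_sum]
  refine Finset.sum_congr rfl fun i _ => ?_
  rw [hasseDeriv_coeff, hasseDeriv_coeff, hg, ← map_pow, mul_comm _ (algebraMap _ _ _),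
    ← Algebra.smul_def, map_smul, smul_eq_mul, ← nsmul_eq_mul, ← nsmul_eq_mul, map_nsmul, mul_comm]

theorem finSuccEquiv_mvTaylor_cons {n : ℕ} (t : R) (v : Fin n → R)
    (Q : MvPolynomial (Fin (n + 1)) R) :
    MvPolynomial.finSuccEquiv R n (mvTaylor (Fin.cons t v) Q) =
      taylor (.C t) ((MvPolynomial.finSuccEquiv R n Q).map (mvTaylor v : _ →+* _)) := by
  have hX (i : Fin (n + 1)) : MvPolynomial.finSuccEquiv R n (mvTaylor (Fin.cons t v) (.X i)) =
      taylor (.C t) ((MvPolynomial.finSuccEquiv R n (.X i)).map (mvTaylor v : _ →+* _)) := by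
    cases i using Fin.cases <;>
      simp [mvTaylor_X, MvPolynomial.finSuccEquiv_apply]
  induction Q using MvPolynomial.induction_on with
  | C r => simp [MvPolynomial.finSuccEquiv_apply]
  | add P Q hP hQ => simp only [map_add, Polynomial.map_add, hP, hQ]
  | mul_X P i hP => rw [map_mul, map_mul, hP, hX, map_mul, Polynomial.map_mul, taylor_mul]

theorem exists_coeff_mvTaylor_ne_zero [IsDomain R] {S : Finset R} (hS : S.Nonempty) {n : ℕ}
    {Q : MvPolynomial (Fin n) R} (hQ : Q ≠ 0) :
    ∃ v : Fin n → R, (∀ i, v i ∈ S) ∧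
      ∃ α, S.card * α.degree ≤ Q.totalDegree ∧ (mvTaylor v Q).coeff α ≠ 0 := by
  induction n with
  | zero =>
    refine ⟨0, fun i => i.elim0, 0, by simp, ?_⟩
    rw [mvTaylor_zero]
    contrapose! hQ
    rw [Q.eq_C_of_isEmpty, hQ, map_zero]
  | succ n ih =>
    set G := MvPolynomial.finSuccEquiv R n Q
    have hG : G.leadingCoeff ≠ 0 := by simpa [G] using hQ
    have hdeg : G.leadingCoeff.totalDegree + G.natDegree ≤ Q.totalDegree :=
      MvPolynomial.totalDegree_coeff_finSuccEquiv_add_le Q _ hG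
    obtain ⟨v, hv, α, hα, hcoeff⟩ := ih hG
    let ℓ : MvPolynomial (Fin n) R →ₗ[R] R := MvPolynomial.lcoeff R α
    -- Fixing the last `n` coordinates at `v` and the order `α` there leaves a polynomial `g` in one
    -- variable, nonzero because the leading coefficient of `G` has not been killed.
    obtain ⟨g, hg⟩ := exists_polynomial_coeff_eq ℓ.toAddMonoidHom (G.map (mvTaylor v : _ →+* _))
    have hg0 : g ≠ 0 := fun h => hcoeff <| by
      simpa [h, ℓ, coeff_map] using (hg G.natDegree).symm
    have hgdeg : g.natDegree ≤ G.natDegree := natDegree_le_iff_coeff_eq_zero.mpr fun i hi => by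
      simp [hg, coeff_map, coeff_eq_zero_of_natDegree_lt hi]
    obtain ⟨t, ht, a, ha, hne⟩ := exists_coeff_taylor_ne_zero hg0 hS
    refine ⟨Fin.cons t v, Fin.cases ht hv, α.cons a, ?_, ?_⟩
    · have hcons : (α.cons a).degree = a + α.degree := Finsupp.sum_cons _ α a
      rw [hcons, mul_add]
      omega
    · rw [← MvPolynomial.finSuccEquiv_coeff_coeff, finSuccEquiv_mvTaylor_cons]
      rwa [coeff_taylor_of_coeff_eq ℓ hg] at hne

end SchwartzZippel

section Direction

open MvPolynomial

theorem homogeneousComponent_totalDegree_ne_zero {σ R : Type*} [CommSemiring R]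
    {P : MvPolynomial σ R} (hP : P ≠ 0) : homogeneousComponent P.totalDegree P ≠ 0 := by
  obtain ⟨β, hβ, hdeg : P.totalDegree = β.degree⟩ :=
    P.support.exists_mem_eq_sup (support_nonempty.mpr hP) Finsupp.degree
  refine ne_zero_iff.mpr ⟨β, ?_⟩
  rw [coeff_homogeneousComponent, if_pos hdeg.symm]
  exact mem_support_iff.mp hβ

theorem sum_sub_le_of_eval_mvHasseDeriv_ne_zero {σ R : Type*} [Finite σ] [CommRing R]
    [IsDomain R] {P : MvPolynomial σ R} {m : (σ → R) → ℕ}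
    (hm : ∀ x, VanishesToOrder P x (m x)) {v : σ → R} {α : σ →₀ ℕ} (hα : α.degree ≤ P.totalDegree)
    (hne : eval v (mvHasseDeriv α (homogeneousComponent P.totalDegree P)) ≠ 0) (S : Finset R)
    (a : σ → R) : ∑ t ∈ S, (m (a + t • v) - α.degree) ≤ P.totalDegree - α.degree := by
  have hdeg := totalDegree_mvHasseDeriv_le α P
  have hg : restrictLine a v (mvHasseDeriv α P) ≠ 0 := fun h => hne <| by
    rw [← Nat.sub_add_cancel hα, ← homogeneousComponent_mvHasseDeriv,
      ← coeff_restrictLine a v hdeg, h, Polynomial.coeff_zero]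
  refine le_trans ?_ ((natDegree_restrictLine_le a v _).trans hdeg)
  refine sum_le_natDegree_of_X_pow_dvd_taylor hg S _ fun t _ => ?_
  rw [taylor_restrictLine]
  exact ((hm _).mvHasseDeriv α).X_pow_dvd_restrictLine v

variable {F : Type*} [Field F] [Fintype F] {n : ℕ} [NeZero n]

theorem exists_eval_mvHasseDeriv_ne_zero_of_isHomogeneous {Q : MvPolynomial (Fin n) F} {d : ℕ}
    (hQ : Q.IsHomogeneous d) (hQ0 : Q ≠ 0) :
    ∃ v ≠ 0, ∃ α : Fin n →₀ ℕ,
      Fintype.card F * α.degree ≤ d ∧ eval v (mvHasseDeriv α Q) ≠ 0 := by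
  simp_rw [eval_mvHasseDeriv]
  obtain ⟨v, -, α, hα, hne⟩ := exists_coeff_mvTaylor_ne_zero Finset.univ_nonempty hQ0
  rw [hQ.totalDegree hQ0, Finset.card_univ] at hα
  -- The direction `v = 0` can only arise for constant `Q`, where any other direction does as well.
  obtain rfl | hv := eq_or_ne v 0
  · rw [mvTaylor_zero] at hne
    have hαd : α.degree = d := by
      by_contra h
      exact hne (hQ.coeff_eq_zero h)
    have hd : d = 0 := by
      have := Fintype.one_lt_card (α := F)
      nlinarith
    subst hd
    rw [← totalDegree_zero_iff_isHomogeneous, totalDegree_eq_zero_iff_eq_C] at hQ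
    refine ⟨1, one_ne_zero, 0, by simp, ?_⟩
    rw [hQ, mvTaylor_C, coeff_C, if_pos rfl, ← (Finsupp.degree_eq_zero_iff α).mp hαd]
    exact hne
  · exact ⟨v, hv, α, hα, hne⟩

theorem exists_direction_sum_le_of_vanishesToOrder {P : MvPolynomial (Fin n) F} (hP : P ≠ 0)
    {m : (Fin n → F) → ℕ} (hm : ∀ x, VanishesToOrder P x (m x)) :
    ∃ v ≠ 0, ∀ a, Fintype.card F * ∑ t : F, m (a + t • v) ≤
      (2 * Fintype.card F - 1) * P.totalDegree := by
  obtain ⟨v, hv, α, hα, hne⟩ := exists_eval_mvHasseDeriv_ne_zero_of_isHomogeneous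
    (homogeneousComponent_isHomogeneous _ P) (homogeneousComponent_totalDegree_ne_zero hP)
  refine ⟨v, hv, fun a => ?_⟩
  have hαd : α.degree ≤ P.totalDegree := (Nat.le_mul_of_pos_left _ Fintype.card_pos).trans hα
  have hsum : ∑ t : F, m (a + t • v) ≤
      P.totalDegree - α.degree + Fintype.card F * α.degree :=
    calc ∑ t : F, m (a + t • v) ≤ ∑ t : F, (m (a + t • v) - α.degree + α.degree) :=
          Finset.sum_le_sum fun t _ => le_tsub_add
      _ = ∑ t : F, (m (a + t • v) - α.degree) + Fintype.card F * α.degree := by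
          rw [Finset.sum_add_distrib, Finset.sum_const, Finset.card_univ, smul_eq_mul]
      _ ≤ P.totalDegree - α.degree + Fintype.card F * α.degree := by
          gcongr
          exact sum_sub_le_of_eval_mvHasseDeriv_ne_zero hm hαd hne Finset.univ a
  obtain ⟨s, hs⟩ := Nat.exists_eq_succ_of_ne_zero (Fintype.card_ne_zero (α := F))
  obtain ⟨e, he⟩ := Nat.exists_eq_add_of_le hαd
  simp only [hs, he, Nat.add_sub_cancel_left] at hα hsum ⊢
  calc s.succ * ∑ t : F, m (a + t • v) ≤ s.succ * (e + s.succ * α.degree) := by gcongr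
    _ = s.succ * (α.degree + e) + s * (s.succ * α.degree) := by
        rw [Nat.succ_eq_add_one]; ring
    _ ≤ s.succ * (α.degree + e) + s * (α.degree + e) := by gcongr
    _ = (2 * s.succ - 1) * (α.degree + e) := by
        rw [← add_mul]; congr 1; omega

end Direction

section Interpolation

open MvPolynomial

variable {σ : Type*} [Fintype σ]

theorem natCard_degree_le (D : ℕ) :
    Nat.card {α : σ →₀ ℕ // α.degree ≤ D} =
      (D + Fintype.card σ).choose (Fintype.card σ) := by
  classical
  have hset : {α : σ →₀ ℕ | α.degree ≤ D} =
      ((Finset.range (D + 1)).biUnion fun j => (Finset.univ : Finset σ).finsuppAntidiag j :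
        Finset (σ →₀ ℕ)) := by
    ext α
    simp [Finset.mem_finsuppAntidiag, Finsupp.degree_eq_sum]
  have hdisj : Set.PairwiseDisjoint (Finset.range (D + 1) : Set ℕ)
      fun j => (Finset.univ : Finset σ).finsuppAntidiag j := fun i _ j _ hij =>
    Finset.disjoint_left.mpr fun α hi hj => hij <|
      (Finset.mem_finsuppAntidiag.mp hi).1.symm.trans (Finset.mem_finsuppAntidiag.mp hj).1
  change Nat.card {α : σ →₀ ℕ | α.degree ≤ D} = _
  rw [hset, Nat.card_coe_set_eq, Set.ncard_coe_finset, Finset.card_biUnion hdisj]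
  simp_rw [Finset.card_finsuppAntidiag_nat_eq_multichoose, Finset.card_univ]
  rw [Nat.sum_range_multichoose]

theorem exists_vanishesToOrder_of_sum_choose_lt {F : Type*} [Field F] {S : Finset (σ → F)}
    {m : (σ → F) → ℕ} {D : ℕ}
    (h : ∑ x ∈ S, (m x + Fintype.card σ).choose (Fintype.card σ) <
      (D + Fintype.card σ).choose (Fintype.card σ)) :
    ∃ P : MvPolynomial σ F, P ≠ 0 ∧ P.totalDegree ≤ D ∧
      ∀ x ∈ S, VanishesToOrder P x (m x + 1) := by
  have hfin (k : ℕ) : Finite {α : σ →₀ ℕ // α.degree ≤ k} := Finsupp.finite_of_degree_le k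
  let ι := Σ x : S, {α : σ →₀ ℕ // α.degree ≤ m x}
  let Φ : restrictTotalDegree σ F D →ₗ[F] ι → F := LinearMap.pi fun c =>
    (lcoeff F c.2.1 ∘ₗ (mvTaylor c.1.1).toLinearMap) ∘ₗ (restrictTotalDegree σ F D).subtype
  let b : Module.Basis {α : σ →₀ ℕ // α.degree ≤ D} F (restrictTotalDegree σ F D) :=
    basisRestrictSupport F _
  have : Module.Finite F (restrictTotalDegree σ F D) := .of_basis b
  have hdom : Module.finrank F (restrictTotalDegree σ F D) =
      (D + Fintype.card σ).choose (Fintype.card σ) := by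
    rw [Module.finrank_eq_nat_card_basis b, natCard_degree_le]
  have hcod : Module.finrank F (ι → F) =
      ∑ x ∈ S, (m x + Fintype.card σ).choose (Fintype.card σ) := by
    cases nonempty_fintype ι
    rw [Module.finrank_fintype_fun_eq_card, ← Nat.card_eq_fintype_card, Nat.card_sigma]
    simp_rw [natCard_degree_le]
    exact Finset.sum_coe_sort S fun x => (m x + Fintype.card σ).choose (Fintype.card σ)
  obtain ⟨P, hP, hP0⟩ := Submodule.exists_mem_ne_zero_of_ne_bot
    (LinearMap.ker_ne_bot_of_finrank_lt (f := Φ) (by rwa [hdom, hcod]))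
  refine ⟨P, by simpa using hP0, (mem_restrictTotalDegree ..).mp P.2, fun x hx => ?_⟩
  refine (mem_pow_idealOfVars_iff' _ _).mpr fun α hα => ?_
  exact congrFun hP ⟨⟨x, hx⟩, α, Nat.lt_succ_iff.mp hα⟩

end Interpolation

section MaximalInequality

theorem sum_choose_lt_choose_of_sum_pow_lt {ι : Type*} {s : Finset ι} {m : ι → ℕ} {D n : ℕ}
    (h : ∑ x ∈ s, (m x + n) ^ n < (D + 1) ^ n) :
    ∑ x ∈ s, (m x + n).choose n < (D + n).choose n := by
  refine lt_of_mul_lt_mul_left (a := n.factorial) ?_ (Nat.zero_le _)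
  rw [Finset.mul_sum]
  calc ∑ x ∈ s, n.factorial * (m x + n).choose n
    _ = ∑ x ∈ s, (m x + 1).ascFactorial n := by simp_rw [Nat.ascFactorial_eq_factorial_mul_choose]
    _ ≤ ∑ x ∈ s, (m x + n) ^ n := Finset.sum_le_sum fun x _ => Nat.ascFactorial_le_pow_add _ _
    _ < (D + 1) ^ n := h
    _ ≤ (D + 1).ascFactorial n := Nat.pow_succ_le_ascFactorial _ _
    _ = n.factorial * (D + n).choose n := Nat.ascFactorial_eq_factorial_mul_choose _ _

theorem sum_add_pow_le_add_pow {ι : Type*} {s : Finset ι} {f g : ι → ℝ} (hf : ∀ x ∈ s, 0 ≤ f x)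
    (hg : ∀ x ∈ s, 0 ≤ g x) {n : ℕ} (hn : n ≠ 0) {A B : ℝ} (hA : 0 ≤ A) (hB : 0 ≤ B)
    (hfA : ∑ x ∈ s, f x ^ n ≤ A ^ n) (hgB : ∑ x ∈ s, g x ^ n ≤ B ^ n) :
    ∑ x ∈ s, (f x + g x) ^ n ≤ (A + B) ^ n := by
  have hroot {h : ι → ℝ} {C : ℝ} (hh : ∀ x ∈ s, 0 ≤ h x) (hC : 0 ≤ C) :
      ∑ x ∈ s, h x ^ n ≤ C ^ n ↔ (∑ x ∈ s, h x ^ n) ^ (1 / n : ℝ) ≤ C := by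
    rw [one_div, Real.rpow_inv_le_iff_of_pos (Finset.sum_nonneg fun x hx => pow_nonneg (hh x hx) n)
      hC (by positivity), Real.rpow_natCast]
  have minkowski := Real.Lp_add_le_of_nonneg s (p := n)
    (Nat.one_le_cast.mpr (Nat.one_le_iff_ne_zero.mpr hn)) hf hg
  simp_rw [Real.rpow_natCast] at minkowski
  rw [hroot (fun x hx => add_nonneg (hf x hx) (hg x hx)) (add_nonneg hA hB)]
  exact minkowski.trans (add_le_add ((hroot hf hA).mp hfA) ((hroot hg hB).mp hgB))

variable {F : Type*} [Field F] [Fintype F] {n : ℕ} [NeZero n]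

theorem exists_direction_sum_le_add_mul {f : (Fin n → F) → ℝ} (hf : ∀ x, 0 ≤ f x) {δ : ℝ}
    (hδ : 0 ≤ δ) (hfδ : ∑ x, f x ^ n ≤ δ ^ n) :
    ∃ v ≠ 0, ∀ a, ∑ t : F, f (a + t • v) ≤
      (2 - (Fintype.card F : ℝ)⁻¹) * (δ + Fintype.card F * n) := by
  set q := Fintype.card F with hq
  have hpow : ∑ x, (⌊f x⌋₊ + n) ^ n < (⌊δ + q * n⌋₊ + 1) ^ n := by
    rify
    calc ∑ x, ((⌊f x⌋₊ : ℝ) + n) ^ n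
      _ ≤ ∑ x, (f x + n) ^ n := by
          gcongr with x
          exact Nat.floor_le (hf x)
      _ ≤ (δ + q * n) ^ n := by
          refine sum_add_pow_le_add_pow (fun x _ => hf x) (fun _ _ => n.cast_nonneg)
            (NeZero.ne n) hδ (by positivity) hfδ (le_of_eq ?_)
          simp [mul_pow, hq]
      _ < (⌊δ + q * n⌋₊ + 1) ^ n :=
          pow_lt_pow_left₀ (Nat.lt_floor_add_one _) (by positivity) (NeZero.ne n)
  obtain ⟨P, hP, hdeg, hvan⟩ := exists_vanishesToOrder_of_sum_choose_lt (σ := Fin n)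
    (by simpa using sum_choose_lt_choose_of_sum_pow_lt hpow)
  obtain ⟨v, hv, hle⟩ :=
    exists_direction_sum_le_of_vanishesToOrder hP fun x => hvan x (Finset.mem_univ x)
  refine ⟨v, hv, fun a => ?_⟩
  have hq0 : 0 < q := Fintype.card_pos
  have hcoeff : (q : ℝ) * (2 - (q : ℝ)⁻¹) = (2 * q - 1 : ℕ) := by
    rw [Nat.cast_sub (by omega)]
    push_cast
    field_simp
  refine le_of_mul_le_mul_left ?_ (Nat.cast_pos.mpr hq0 : (0 : ℝ) < q)
  calc (q : ℝ) * ∑ t : F, f (a + t • v)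
    _ ≤ q * ∑ t : F, ((⌊f (a + t • v)⌋₊ : ℝ) + 1) := by
        gcongr
        exact (Nat.lt_floor_add_one _).le
    _ ≤ (2 * q - 1 : ℕ) * P.totalDegree := by exact_mod_cast hle a
    _ ≤ (2 * q - 1 : ℕ) * (δ + q * n) := by
        gcongr
        exact (Nat.cast_le.mpr hdeg).trans (Nat.floor_le (by positivity))
    _ = q * ((2 - (q : ℝ)⁻¹) * (δ + q * n)) := by rw [← hcoeff, mul_assoc]

theorem exists_direction_sum_le {f : (Fin n → F) → ℝ} (hf : ∀ x, 0 ≤ f x) {δ : ℝ}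
    (hδ : 0 ≤ δ) (hfδ : ∑ x, f x ^ n ≤ δ ^ n) :
    ∃ v ≠ 0, ∀ a, ∑ t : F, f (a + t • v) ≤ (2 - (Fintype.card F : ℝ)⁻¹) * δ := by
  have hscaled (N : ℕ) : ∃ v : Fin n → F, v ≠ 0 ∧ ∀ a, ∑ t : F, f (a + t • v) ≤
      (2 - (Fintype.card F : ℝ)⁻¹) * (δ + Fintype.card F * n * (1 / ((N : ℝ) + 1))) := by
    obtain ⟨v, hv, hle⟩ := exists_direction_sum_le_add_mul (f := fun x => (N + 1) * f x)
      (fun x => mul_nonneg (by positivity) (hf x)) (δ := (N + 1) * δ) (by positivity) (by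
        simp_rw [mul_pow, ← Finset.mul_sum]
        gcongr)
    refine ⟨v, hv, fun a => ?_⟩
    have h := hle a
    rw [← Finset.mul_sum] at h
    refine le_of_mul_le_mul_left (h.trans_eq ?_) (by positivity : (0 : ℝ) < N + 1)
    field_simp
  -- There are finitely many directions, so one of them works for infinitely many `N`.
  obtain ⟨v, hv⟩ := Filter.frequently_exists.mp
    (Filter.Frequently.of_forall (f := Filter.atTop) hscaled)
  obtain ⟨-, hv0, -⟩ := hv.exists
  have hlim : Filter.Tendsto
      (fun N : ℕ => (2 - (Fintype.card F : ℝ)⁻¹) * (δ + Fintype.card F * n * (1 / ((N : ℝ) + 1))))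
      Filter.atTop
      (nhds ((2 - (Fintype.card F : ℝ)⁻¹) * (δ + Fintype.card F * n * 0))) :=
    ((tendsto_one_div_add_atTop_nhds_zero_nat.const_mul _).const_add _).const_mul _
  rw [mul_zero, add_zero] at hlim
  exact ⟨v, hv0, fun a => ge_of_tendsto_of_frequently hlim (hv.mono fun _ h => h.2 a)⟩

end MaximalInequality

section Projection

variable {F V W : Type*} [Field F] [AddCommGroup V] [Module F V] [AddCommGroup W] [Module F W]

theorem exists_surjective_ker_eq [FiniteDimensional F V] [FiniteDimensional F W]
    {K : Submodule F V}
    (h : Module.finrank F W + Module.finrank F K = Module.finrank F V) :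
    ∃ φ : V →ₗ[F] W, Function.Surjective φ ∧ LinearMap.ker φ = K := by
  have hVK : Module.finrank F (V ⧸ K) = Module.finrank F W :=
    Nat.add_right_cancel (K.finrank_quotient_add_finrank.trans h.symm)
  let e : (V ⧸ K) ≃ₗ[F] W := .ofFinrankEq _ _ hVK
  refine ⟨e.toLinearMap ∘ₗ K.mkQ, e.surjective.comp K.mkQ_surjective, ?_⟩
  rw [LinearEquiv.ker_comp, Submodule.ker_mkQ]

theorem sum_filter_apply_eq_sum_line {M : Type*} [AddCommMonoid M] [Fintype F] [Fintype V]
    [DecidableEq W] {φ : V →ₗ[F] W} {v : V} (hv : v ≠ 0)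
    (hker : LinearMap.ker φ = Submodule.span F {v}) (f : V → M) (a : V) :
    ∑ x with φ x = φ a, f x = ∑ t : F, f (a + t • v) := by
  symm
  refine Finset.sum_bij (fun t _ => a + t • v) (fun t _ => ?_) (fun s _ t _ hst => ?_)
    (fun x hx => ?_) fun t _ => rfl
  · have hφv : φ v = 0 := by
      rw [← LinearMap.mem_ker, hker]
      exact Submodule.mem_span_singleton_self v
    simp [hφv]
  · exact smul_left_injective F hv (add_left_cancel hst)
  · have hxa : x - a ∈ LinearMap.ker φ := by
      rw [LinearMap.mem_ker, map_sub, (Finset.mem_filter.1 hx).2, sub_self]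
    obtain ⟨t, ht⟩ := Submodule.mem_span_singleton.1 (hker ▸ hxa)
    exact ⟨t, Finset.mem_univ t, by rw [ht, add_sub_cancel]⟩

end Projection

section MinEntropy

variable {α β : Type*}

theorem toReal_le_iSup_toReal [Finite α] (p : PMF α) (x : α) :
    (p x).toReal ≤ ⨆ w, (p w).toReal :=
  le_ciSup (f := fun w => (p w).toReal) (Set.finite_range _).bddAbove x

theorem iSup_toReal_pos [Finite α] (p : PMF α) : 0 < ⨆ w, (p w).toReal := by
  obtain ⟨x, hx⟩ := p.support_nonempty
  exact (ENNReal.toReal_pos ((p.mem_support_iff x).1 hx) (p.apply_ne_top x)).trans_le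
    (toReal_le_iSup_toReal p x)

theorem sum_toReal_eq_one [Fintype α] (p : PMF α) : ∑ x, (p x).toReal = 1 := by
  rw [← ENNReal.toReal_sum fun x _ => p.apply_ne_top x, ← tsum_fintype (L := .unconditional _),
    p.tsum_coe, ENNReal.toReal_one]

theorem toReal_map_apply [Fintype α] [DecidableEq β] (p : PMF α) (f : α → β) (b : β) :
    (p.map f b).toReal = ∑ x with f x = b, (p x).toReal := by
  rw [← ENNReal.toReal_sum fun x _ => p.apply_ne_top x, PMF.map_apply, tsum_fintype,
    Finset.sum_filter]
  simp only [eq_comm (a := b)]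

theorem sum_toReal_pow_succ_le [Fintype α] (p : PMF α) (n : ℕ) :
    ∑ x, (p x).toReal ^ (n + 1) ≤ (⨆ w, (p w).toReal) ^ n := by
  calc ∑ x, (p x).toReal ^ (n + 1)
    _ ≤ ∑ x, (⨆ w, (p w).toReal) ^ n * (p x).toReal := by
        refine Finset.sum_le_sum fun x _ => ?_
        rw [pow_succ]
        gcongr
        exact toReal_le_iSup_toReal p x
    _ = (⨆ w, (p w).toReal) ^ n := by rw [← Finset.mul_sum, sum_toReal_eq_one, mul_one]

theorem neg_logb_le_minEntropy [Finite α] {q : ℕ} (hq : 1 < q) {p : PMF α} {c : ℝ}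
    (h : ∀ x, (p x).toReal ≤ c) : -Real.logb q c ≤ minEntropy q p :=
  have : Nonempty α := p.support_nonempty.to_type
  neg_le_neg <| Real.logb_le_logb_of_le (Nat.one_lt_cast.2 hq) (iSup_toReal_pos p) (ciSup_le h)

end MinEntropy

section Furstenberg

variable {F : Type*} [Field F] [Fintype F] {q : ℕ}

theorem exists_surjective_minEntropy_map_succ (hq : Fintype.card F = q) {n : ℕ}
    (R : PMF (Fin (n + 1) → F)) :
    ∃ φ : (Fin (n + 1) → F) →ₗ[F] (Fin n → F), Function.Surjective φ ∧
      (n : ℝ) / (n + 1) * minEntropy q R - Real.logb q (2 - (q : ℝ)⁻¹) ≤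
        minEntropy q (R.map φ) := by
  classical
  set M := ⨆ w, (R w).toReal
  have hM0 : 0 < M := iSup_toReal_pos R
  have hpow : (M ^ ((n : ℝ) / (n + 1))) ^ (n + 1) = M ^ n := by
    rw [← Real.rpow_mul_natCast hM0.le, Nat.cast_succ, div_mul_cancel₀ _ n.cast_add_one_ne_zero,
      Real.rpow_natCast]
  obtain ⟨v, hv, hline⟩ := exists_direction_sum_le (fun _ => ENNReal.toReal_nonneg)
    (Real.rpow_nonneg hM0.le _) ((sum_toReal_pow_succ_le R n).trans_eq hpow.symm)
  rw [hq] at hline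
  obtain ⟨φ, hφ, hker⟩ : ∃ φ : (Fin (n + 1) → F) →ₗ[F] (Fin n → F),
      Function.Surjective φ ∧ LinearMap.ker φ = Submodule.span F {v} :=
    exists_surjective_ker_eq (by simp [finrank_span_singleton hv])
  refine ⟨φ, hφ, ?_⟩
  have hmax (y : Fin n → F) :
      (R.map φ y).toReal ≤ (2 - (q : ℝ)⁻¹) * M ^ ((n : ℝ) / (n + 1)) := by
    obtain ⟨a, rfl⟩ := hφ y
    rw [toReal_map_apply, sum_filter_apply_eq_sum_line hv hker]
    exact hline a
  have hc : (2 - (q : ℝ)⁻¹) ≠ 0 := by linarith [Nat.cast_inv_le_one (α := ℝ) q]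
  calc (n : ℝ) / (n + 1) * minEntropy q R - Real.logb q (2 - (q : ℝ)⁻¹)
    _ = -Real.logb q ((2 - (q : ℝ)⁻¹) * M ^ ((n : ℝ) / (n + 1))) := by
        rw [Real.logb_mul hc (Real.rpow_pos_of_pos hM0 _).ne',
          Real.logb_rpow_eq_mul_logb_of_pos hM0, minEntropy]
        ring
    _ ≤ minEntropy q (R.map φ) := neg_logb_le_minEntropy (hq ▸ Fintype.one_lt_card) hmax

theorem exists_surjective_minEntropy_map_add (hq : Fintype.card F = q) {j : ℕ} (hj : j ≠ 0)
    (k : ℕ) (R : PMF (Fin (j + k) → F)) :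
    ∃ φ : (Fin (j + k) → F) →ₗ[F] (Fin j → F), Function.Surjective φ ∧
      (j : ℝ) / (j + k) * minEntropy q R - k * Real.logb q (2 - (q : ℝ)⁻¹) ≤
        minEntropy q (R.map φ) := by
  induction k with
  | zero => exact ⟨LinearMap.id, Function.surjective_id, by simp [hj, PMF.map_id]⟩
  | succ k ih =>
    obtain ⟨φ, hφ, hRφ⟩ := exists_surjective_minEntropy_map_succ hq R
    obtain ⟨ψ, hψ, hRψ⟩ := ih (R.map φ)
    refine ⟨ψ ∘ₗ φ, hψ.comp hφ, ?_⟩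
    rw [LinearMap.coe_comp, ← PMF.map_comp]
    set L := Real.logb q (2 - (q : ℝ)⁻¹)
    have hL : 0 ≤ L := Real.logb_nonneg (Nat.one_lt_cast.2 (hq ▸ Fintype.one_lt_card))
      (by linarith [Nat.cast_inv_le_one (α := ℝ) q])
    have hjk : (j : ℝ) / (j + k) ≤ 1 := div_le_one_of_le₀ (by simp) (by positivity)
    calc (j : ℝ) / (j + (k + 1 : ℕ)) * minEntropy q R - (k + 1 : ℕ) * L
      _ ≤ (j : ℝ) / (j + (k + 1 : ℕ)) * minEntropy q R - (j : ℝ) / (j + k) * L - k * L := by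
          push_cast
          linarith [mul_le_of_le_one_left hL hjk]
      _ = (j : ℝ) / (j + k) *
            ((j + k : ℕ) / ((j + k : ℕ) + 1) * minEntropy q R - L) - k * L := by
          push_cast
          field_simp
          ring
      _ ≤ (j : ℝ) / (j + k) * minEntropy q (R.map φ) - k * L := by gcongr; exact hRφ
      _ ≤ minEntropy q ((R.map φ).map ψ) := hRψ

end Furstenberg

/-- Entropic Furstenberg bound: for any random variable `R` supported on `F_q^n` and any
`1 ≤ k < n`, there is a surjective linear map `φ : F_q^n → F_q^{n−k}` with
`H_∞^q(φ(R)) ≥ ((n−k)/n)·H_∞^q(R) − k·log_q(2 − q^{-1})`. -/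
theorem entropic_furstenberg {F : Type*} [Field F] [Fintype F] (q n k : ℕ)
    (hq : Fintype.card F = q) (hk : 1 ≤ k) (hkn : k < n) (R : PMF (Fin n → F)) :
    ∃ φ : (Fin n → F) →ₗ[F] (Fin (n - k) → F), Function.Surjective φ ∧
      ((n : ℝ) - k) / n * minEntropy q R - k * Real.logb q (2 - (q : ℝ)⁻¹) ≤
        minEntropy q (R.map φ) := by
  obtain ⟨j, rfl⟩ := Nat.exists_eq_add_of_le' hkn.le
  rw [Nat.add_sub_cancel, Nat.cast_add, add_sub_cancel_right]
  exact exists_surjective_minEntropy_map_add hq (by lia) k R
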